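/- arXiv:1902.08519 — 5 statements merged into one kernel-verified Lean document; each statement's English description precedes it below -/
import Mathlib

section
/- For all real numbers u, v, a, b, c, setting Ω² = 4/((1+u²)(1+v²)), the quadratic expression Q := (1/8)·Ω²·((2+u²+v²)² − 1)·a² + (1/4)·Ω²·(2+u²+v²)·(u²−v²)·a·b + (u²−v²)²·b² + b² + c² satisfies Q ≥ (1/8)·Ω²·(a² + b² + c²). -/
/-- the key algebraic inequality in the Proposition of Section 5:
with `Ω² = 4/((1+u²)(1+v²))`, the quadratic form `Q` (which equals `Ω⁻²|X|²_Γ`)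
is bounded below by `(1/8)·Ω²·(a² + b² + c²)`. -/
theorem cronstrom_quadratic_lower_bound (u v a b c : ℝ) :
    (1/8) * (4 / ((1 + u^2) * (1 + v^2))) * ((2 + u^2 + v^2)^2 - 1) * a^2
      + (1/4) * (4 / ((1 + u^2) * (1 + v^2))) * (2 + u^2 + v^2) * (u^2 - v^2) * (a * b)
      + (u^2 - v^2)^2 * b^2 + b^2 + c^2
    ≥ (1/8) * (4 / ((1 + u^2) * (1 + v^2))) * (a^2 + b^2 + c^2) := by
  have hu := sq_nonneg u
  have hv := sq_nonneg v
  have hP : 1 ≤ (1 + u^2) * (1 + v^2) := by nlinarith [mul_nonneg hu hv]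
  have hpos : 0 < (1 + u^2) * (1 + v^2) := by linarith
  have hs : 0 ≤ (2 + u^2 + v^2)^2 / 4 - 1 := by nlinarith [mul_nonneg hu hv]
  have key : 0 ≤ (((2 + u^2 + v^2) * a / 2 + (u^2 - v^2) * b)^2
      + ((2 + u^2 + v^2)^2 / 4 - 1) * a^2
      + ((1 + u^2) * (1 + v^2) - 1) * ((u^2 - v^2) * b)^2
      + ((1 + u^2) * (1 + v^2) - 1/2) * b^2
      + ((1 + u^2) * (1 + v^2) - 1/2) * c^2) / ((1 + u^2) * (1 + v^2)) := by
    have h1 : 0 ≤ (1 + u^2) * (1 + v^2) - 1 := by linarith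
    have h2 : 0 ≤ (1 + u^2) * (1 + v^2) - 1/2 := by linarith
    refine div_nonneg ?_ hpos.le
    have := mul_nonneg hs (sq_nonneg a)
    have := mul_nonneg h1 (sq_nonneg ((u^2 - v^2) * b))
    have := mul_nonneg h2 (sq_nonneg b)
    have := mul_nonneg h2 (sq_nonneg c)
    have := sq_nonneg ((2 + u^2 + v^2) * a / 2 + (u^2 - v^2) * b)
    linarith
  rw [ge_iff_le, ← sub_nonneg]
  refine key.trans_eq ?_
  have hp : (1 + u^2) ≠ 0 := by positivity
  have hq : (1 + v^2) ≠ 0 := by positivity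
  field_simp
  ring
end

section
/- For every R > 0 there exist constants 0 < c₁ ≤ c₂ such that for all real u, v with |u| ≤ R and |v| ≤ R and all real a, b, c, setting Ω² = 4/((1+u²)(1+v²)), the quadratic expression Q := (1/8)·Ω²·((2+u²+v²)² − 1)·a² + (1/4)·Ω²·(2+u²+v²)·(u²−v²)·a·b + (u²−v²)²·b² + b² + c² satisfies c₁·(a² + b² + c²) ≤ Q ≤ c₂·(a² + b² + c²). -/
/-- on a region where the null coordinates `u, v` are bounded by `R`,
the quadratic form `Q = Ω⁻²|X|²_Γ` is equivalent to `a² + b² + c² = |X|²_Γ̂`. -/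
theorem gamma_norms_equivalent_on_cone (R : ℝ) (hR : 0 < R) :
    ∃ c₁ c₂ : ℝ, 0 < c₁ ∧ c₁ ≤ c₂ ∧
      ∀ u v : ℝ, |u| ≤ R → |v| ≤ R → ∀ a b c : ℝ,
        c₁ * (a^2 + b^2 + c^2) ≤
          (1/8) * (4 / ((1 + u^2) * (1 + v^2))) * ((2 + u^2 + v^2)^2 - 1) * a^2
            + (1/4) * (4 / ((1 + u^2) * (1 + v^2))) * (2 + u^2 + v^2) * (u^2 - v^2) * (a * b)
            + (u^2 - v^2)^2 * b^2 + b^2 + c^2 ∧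
        (1/8) * (4 / ((1 + u^2) * (1 + v^2))) * ((2 + u^2 + v^2)^2 - 1) * a^2
            + (1/4) * (4 / ((1 + u^2) * (1 + v^2))) * (2 + u^2 + v^2) * (u^2 - v^2) * (a * b)
            + (u^2 - v^2)^2 * b^2 + b^2 + c^2 ≤ c₂ * (a^2 + b^2 + c^2) := by
  refine ⟨1/6, 1 + 2 * (2 + 2 * R^2)^2, by norm_num, by nlinarith [sq_nonneg (2 + 2 * R^2)], ?_⟩
  intro u v hu hv a b c
  have hu2 : u^2 ≤ R^2 := sq_le_sq' (by linarith [abs_le.mp hu]) (abs_le.mp hu).2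
  have hv2 : v^2 ≤ R^2 := sq_le_sq' (by linarith [abs_le.mp hv]) (abs_le.mp hv).2
  have hu0 := sq_nonneg u
  have hv0 := sq_nonneg v
  have hP1 : 1 ≤ (1 + u^2) * (1 + v^2) := by nlinarith [mul_nonneg hu0 hv0]
  have hP0 : 0 < (1 + u^2) * (1 + v^2) := by linarith
  obtain ⟨w, hw⟩ : ∃ w, w = 1 / ((1 + u^2) * (1 + v^2)) := ⟨_, rfl⟩
  have hw0 : 0 < w := by rw [hw]; positivity
  have hw1 : w ≤ 1 := by rw [hw, div_le_one hP0]; exact hP1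
  have hwP : w * ((1 + u^2) * (1 + v^2)) = 1 := by rw [hw]; field_simp
  have h4 : 4 / ((1 + u^2) * (1 + v^2)) = 4 * w := by rw [hw]; ring
  rw [h4]
  obtain ⟨s, hs⟩ : ∃ s, s = 2 + u^2 + v^2 := ⟨_, rfl⟩
  obtain ⟨d, hd⟩ : ∃ d, d = u^2 - v^2 := ⟨_, rfl⟩
  rw [← hs, ← hd]
  have hs2 : 2 ≤ s := by linarith
  have hsR : s^2 ≤ (2 + 2 * R^2)^2 := by
    apply pow_le_pow_left₀ <;> linarith
  have hdR : d^2 ≤ s^2 := sq_le_sq' (by linarith) (by linarith)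
  have hsP : w * s^2 = 4 + w * d^2 := by
    have : s^2 = 4 * ((1 + u^2) * (1 + v^2)) + d^2 := by rw [hs, hd]; ring
    rw [this]; linear_combination 4 * hwP
  have hws : 4 ≤ w * s^2 := by rw [hsP]; nlinarith [mul_nonneg hw0.le (sq_nonneg d)]
  have hww : w^2 * s^2 ≤ w * s^2 := by nlinarith [mul_nonneg hw0.le (sq_nonneg s)]
  have hws1 : w * s^2 ≤ s^2 := by nlinarith [sq_nonneg s]
  have h4s : 4 * w ≤ w * s^2 := by nlinarith
  have ha := sq_nonneg a
  have hb := sq_nonneg b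
  have hc := sq_nonneg c
  have hdb := mul_nonneg (sq_nonneg d) hb
  have k1 := mul_le_mul_of_nonneg_right hww ha
  have k2 := mul_le_mul_of_nonneg_right h4s ha
  have k3 := mul_le_mul_of_nonneg_right hws ha
  have k4 := mul_le_mul_of_nonneg_right hws1 ha
  have k5 := mul_le_mul_of_nonneg_right hsR ha
  have k6 := mul_le_mul_of_nonneg_right hsR hb
  have k7 := mul_le_mul_of_nonneg_right hdR hb
  have k8 := mul_nonneg hw0.le ha
  have k9 := mul_nonneg (sq_nonneg (2 + 2 * R^2)) hc
  have k10 := mul_nonneg (sq_nonneg (2 + 2 * R^2)) ha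
  have k11 := mul_nonneg (sq_nonneg (2 + 2 * R^2)) hb
  have l1 := sq_nonneg (2 * (w * s * a) + 3 * (d * b))
  have l2 := sq_nonneg (w * s * a - d * b)
  generalize (2 + 2 * R^2)^2 = M at *
  constructor
  · linarith
  · linarith
end

section
/- Let n ∈ ℕ and let A_a : ℝ⁴ → M_n(ℝ), a = 0,1,2,3, be continuously differentiable matrix-valued functions satisfying the Cronström gauge condition ∑_{a=0}^{3} x^a A_a(x) = 0 for all x ∈ ℝ⁴. Define the curvature F_{ab}(x) = ∂_a A_b(x) − ∂_b A_a(x) + [A_a(x), A_b(x)]. Then for every x ∈ ℝ⁴ and every index b, the potential is recovered from its curvature by A_b(x) = ∫₀¹ s · ∑_{a=0}^{3} x^a F_{ab}(sx) ds. -/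
open MeasureTheory

attribute [local instance] Matrix.normedAddCommGroup Matrix.normedSpace

/-- The partial derivative `∂_a A(x)` of a matrix-valued function on `ℝ⁴`. -/
noncomputable def partialD {n : ℕ} (A : (Fin 4 → ℝ) → Matrix (Fin n) (Fin n) ℝ)
    (a : Fin 4) (x : Fin 4 → ℝ) : Matrix (Fin n) (Fin n) ℝ :=
  fderiv ℝ A x (Pi.single a 1)

/-- The curvature `F_{ab} = ∂_a A_b − ∂_b A_a + [A_a, A_b]` of a matrix-valued
Yang–Mills potential `A` on `ℝ⁴`. -/
noncomputable def curvF {n : ℕ} (A : Fin 4 → (Fin 4 → ℝ) → Matrix (Fin n) (Fin n) ℝ)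
    (a b : Fin 4) (x : Fin 4 → ℝ) : Matrix (Fin n) (Fin n) ℝ :=
  partialD (A b) a x - partialD (A a) b x + (A a x * A b x - A b x * A a x)

/-- the Cronström potential formula: if `A` is `C¹` and satisfies the
Cronström gauge condition `∑_a x^a A_a(x) = 0`, then
`A_b(x) = ∫₀¹ s·∑_a x^a F_{ab}(sx) ds`. -/
theorem cronstrom_potential_formula {n : ℕ}
    (A : Fin 4 → (Fin 4 → ℝ) → Matrix (Fin n) (Fin n) ℝ)
    (hA : ∀ a, ContDiff ℝ 1 (A a))
    (hCron : ∀ x : Fin 4 → ℝ, ∑ a, x a • A a x = 0)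
    (x : Fin 4 → ℝ) (b : Fin 4) :
    A b x = ∫ s in (0:ℝ)..1, s • ∑ a, x a • curvF A a b (s • x) := by
  have hdiff : ∀ a y, HasFDerivAt (A a) (fderiv ℝ (A a) y) y := fun a y =>
    ((hA a).differentiable one_ne_zero y).hasFDerivAt
  -- differentiated gauge condition
  have hgauge : ∀ y : Fin 4 → ℝ, A b y + ∑ a, y a • partialD (A a) b y = 0 := by
    intro y
    have h1 : HasFDerivAt (fun z : Fin 4 → ℝ => ∑ a, z a • A a z)
        (∑ a, (y a • fderiv ℝ (A a) y +
          (ContinuousLinearMap.proj (R := ℝ) (φ := fun _ : Fin 4 => ℝ) a).smulRight (A a y))) y := by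
      refine HasFDerivAt.fun_sum fun a _ => ?_
      exact HasFDerivAt.fun_smul
        ((ContinuousLinearMap.proj (R := ℝ) (φ := fun _ : Fin 4 => ℝ) a).hasFDerivAt) (hdiff a y)
    have h2 : HasFDerivAt (fun z : Fin 4 → ℝ => ∑ a, z a • A a z)
        (0 : (Fin 4 → ℝ) →L[ℝ] Matrix (Fin n) (Fin n) ℝ) y := by
      have : (fun z : Fin 4 → ℝ => ∑ a, z a • A a z) = fun _ => 0 := funext hCron
      rw [this]
      exact hasFDerivAt_const _ _
    have h3 := congrArg (fun L => L (Pi.single b (1 : ℝ))) (h1.unique h2)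
    simp only [ContinuousLinearMap.sum_apply, ContinuousLinearMap.add_apply,
      ContinuousLinearMap.smul_apply, ContinuousLinearMap.smulRight_apply,
      ContinuousLinearMap.proj_apply, ContinuousLinearMap.zero_apply,
      Finset.sum_add_distrib] at h3
    have h4 : ∑ a, (Pi.single b (1 : ℝ) : Fin 4 → ℝ) a • A a y = A b y := by
      rw [Finset.sum_eq_single b]
      · simp
      · intro a _ hab
        simp [hab]
      · simp
    rw [h4] at h3
    rw [add_comm]
    exact h3
  have hcomm : ∀ y : Fin 4 → ℝ, ∑ a, y a • (A a y * A b y - A b y * A a y) = 0 := by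
    intro y
    have : ∑ a, y a • (A a y * A b y - A b y * A a y)
        = (∑ a, y a • A a y) * A b y - A b y * ∑ a, y a • A a y := by
      simp only [smul_sub, Finset.sum_sub_distrib, Finset.sum_mul, Finset.mul_sum,
        Matrix.smul_mul, Matrix.mul_smul]
    rw [this, hCron]
    simp
  have hlin : ∀ y : Fin 4 → ℝ, fderiv ℝ (A b) y x = ∑ a, x a • partialD (A b) a y := by
    intro y
    conv_lhs => rw [pi_eq_sum_univ' x]
    rw [map_sum]
    refine Finset.sum_congr rfl fun a _ => ?_
    rw [map_smul]
    unfold partialD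
    congr 2
  have hkey : ∀ s : ℝ, s • ∑ a, x a • curvF A a b (s • x)
      = s • fderiv ℝ (A b) (s • x) x + A b (s • x) := by
    intro s
    have hg := hgauge (s • x)
    have hc := hcomm (s • x)
    simp only [Pi.smul_apply, smul_eq_mul, mul_smul, ← Finset.smul_sum] at hg hc
    rw [hlin]
    unfold curvF
    simp only [smul_add, smul_sub, Finset.sum_add_distrib, Finset.sum_sub_distrib] at hc ⊢
    rw [hc, eq_neg_of_add_eq_zero_left hg]
    abel
  have hderiv : ∀ s : ℝ, HasDerivAt (fun s : ℝ => s • A b (s • x))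
      (s • fderiv ℝ (A b) (s • x) x + A b (s • x)) s := by
    intro s
    have h1 : HasDerivAt (fun s : ℝ => s • x) x s := by
      simpa using (hasDerivAt_id s).smul_const x
    have h2 := (hdiff b (s • x)).comp_hasDerivAt s h1
    have h3 := (hasDerivAt_id s).fun_smul h2
    simp only [id, Function.comp_apply, one_smul] at h3
    exact h3
  have hcont : Continuous fun s : ℝ => s • fderiv ℝ (A b) (s • x) x + A b (s • x) := by
    have h1 : Continuous fun s : ℝ => s • x := by fun_prop
    have h2 : Continuous fun s : ℝ => fderiv ℝ (A b) (s • x) :=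
      ((hA b).continuous_fderiv one_ne_zero).comp h1
    exact (continuous_id.smul (h2.clm_apply continuous_const)).add ((hA b).continuous.comp h1)
  simp only [hkey]
  rw [intervalIntegral.integral_eq_sub_of_hasDerivAt (fun s _ => hderiv s)
    (hcont.intervalIntegrable 0 1)]
  simp
end

section
/- Let n ∈ ℕ and let A_a : ℝ⁴ → M_n(ℝ), a = 0,1,2,3, be twice continuously differentiable matrix-valued functions satisfying the Cronström gauge condition ∑_{a=0}^{3} x^a A_a(x) = 0 for all x ∈ ℝ⁴. Define F_{ab} = ∂_a A_b − ∂_b A_a + [A_a, A_b] and D_c F_{ab} = ∂_c F_{ab} + [A_c, F_{ab}], raise indices with the Minkowski metric η = diag(1,−1,−1,−1), and suppose J_a : ℝ⁴ → M_n(ℝ) are continuous functions such that the field equation η^{bc} D_c F_{ab} = −J_a holds on ℝ⁴. Then the Lorentz divergence of A satisfies η^{ab} (∂_a A_b)(x) = ∫₀¹ s² ∑_{a} x^a ( [F_{ab}(sx), A^b(sx)] − J_a(sx) ) ds for all x ∈ ℝ⁴, where A^b = η^{bc} A_c and the index b in the bracket is summed with η. -/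
open MeasureTheory

attribute [local instance] Matrix.normedAddCommGroup Matrix.normedSpace

/-- The gauge-covariant derivative `D_c F_{ab} = ∂_c F_{ab} + [A_c, F_{ab}]`. -/
noncomputable def covDF {n : ℕ} (A : Fin 4 → (Fin 4 → ℝ) → Matrix (Fin n) (Fin n) ℝ)
    (c a b : Fin 4) (x : Fin 4 → ℝ) : Matrix (Fin n) (Fin n) ℝ :=
  partialD (curvF A a b) c x + (A c x * curvF A a b x - curvF A a b x * A c x)

/-- The diagonal entries of the Minkowski metric `η = diag(1,−1,−1,−1)`. -/
noncomputable def eta : Fin 4 → ℝ := fun i => if i = 0 then 1 else -1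


section CronHelpers

lemma gen_contDiff {E : Type*} [NormedAddCommGroup E] [NormedSpace ℝ E]
    {f : (Fin 4 → ℝ) → E} (hf : ContDiff ℝ 2 f) (v : Fin 4 → ℝ) :
    ContDiff ℝ 1 (fun y => fderiv ℝ f y v) := by
  have h : ContDiff ℝ 1 (fderiv ℝ f) := hf.fderiv_right (by norm_num)
  exact h.clm_apply contDiff_const

lemma gen_comm {E : Type*} [NormedAddCommGroup E] [NormedSpace ℝ E]
    {f : (Fin 4 → ℝ) → E} (hf : ContDiff ℝ 2 f) (v w y : Fin 4 → ℝ) :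
    fderiv ℝ (fun z => fderiv ℝ f z v) y w = fderiv ℝ (fun z => fderiv ℝ f z w) y v := by
  have h : ContDiff ℝ 1 (fderiv ℝ f) := hf.fderiv_right (by norm_num)
  have hd : DifferentiableAt ℝ (fderiv ℝ f) y := h.differentiable (by norm_num) y
  have key : ∀ v w, fderiv ℝ (fun z => fderiv ℝ f z v) y w
      = fderiv ℝ (fderiv ℝ f) y w v := by
    intro v w
    rw [(hd.hasFDerivAt.clm_apply (hasFDerivAt_const v y)).fderiv]
    simp
  rw [key, key]
  exact (hf.contDiffAt.isSymmSndFDerivAt (by simp)) _ _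

lemma gen_contract {E : Type*} [NormedAddCommGroup E] [NormedSpace ℝ E]
    {f : Fin 4 → (Fin 4 → ℝ) → E} (hf : ∀ a, ContDiff ℝ 1 (f a)) (c : Fin 4) (y : Fin 4 → ℝ) :
    fderiv ℝ (fun z => ∑ a, z a • f a z) y (Pi.single c 1)
      = f c y + ∑ a, y a • fderiv ℝ (f a) y (Pi.single c 1) := by
  have h : HasFDerivAt (fun z : Fin 4 → ℝ => ∑ a, z a • f a z) _ y :=
    HasFDerivAt.fun_sum (u := Finset.univ) fun a _ =>
      (hasFDerivAt_apply (𝕜 := ℝ) a y).fun_smul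
        (((hf a).differentiable (by norm_num)) y).hasFDerivAt
  rw [h.fderiv]
  simp [sum_apply, Finset.sum_add_distrib, Pi.single_apply, add_comm]

lemma gen_contract_add {E : Type*} [NormedAddCommGroup E] [NormedSpace ℝ E]
    {f : Fin 4 → (Fin 4 → ℝ) → E} {g : (Fin 4 → ℝ) → E}
    (hf : ∀ a, ContDiff ℝ 1 (f a)) (hg : ContDiff ℝ 2 g) (c : Fin 4) (y : Fin 4 → ℝ) :
    fderiv ℝ (fun z => ∑ a, z a • f a z + g z) y (Pi.single c 1)
      = fderiv ℝ (fun z => ∑ a, z a • f a z) y (Pi.single c 1)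
        + fderiv ℝ g y (Pi.single c 1) := by
  have d1 : DifferentiableAt ℝ (fun z : Fin 4 → ℝ => ∑ a, z a • f a z) y := by
    refine DifferentiableAt.fun_sum fun a _ => ?_
    exact (differentiableAt_apply a y).fun_smul ((hf a).differentiable (by norm_num) y)
  have d2 : DifferentiableAt ℝ g y := hg.differentiable (by norm_num) y
  rw [(d1.hasFDerivAt.fun_add d2.hasFDerivAt).fderiv]
  rfl

lemma gen_continuous {E : Type*} [NormedAddCommGroup E] [NormedSpace ℝ E]
    {f : Fin 4 → Fin 4 → ℝ → E} {g : Fin 4 → ℝ → E} (x e : Fin 4 → ℝ)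
    (hf : ∀ a b, Continuous (f a b)) (hg : ∀ a, Continuous (g a)) :
    Continuous (fun s : ℝ => s ^ 2 • ∑ a, x a • ((∑ b, e b • f a b s) - g a s)) := by
  fun_prop

lemma gen_smul {E : Type*} [AddCommGroup E] [Module ℝ E]
    (s : ℝ) (x : Fin 4 → ℝ) (D : E) (e : Fin 4 → ℝ) (P : Fin 4 → Fin 4 → E) (R : Fin 4 → E)
    (h : (2:ℝ) • D + ∑ b, e b • ∑ a, (s • x) a • P b a = ∑ a, (s • x) a • R a) :
    s ^ 2 • ∑ b, e b • ∑ a, x a • P b a + (2 * s) • D = s ^ 2 • ∑ a, x a • R a := by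
  have h1 : ∀ Q : Fin 4 → E, ∑ a, (s • x) a • Q a = s • ∑ a, x a • Q a := by
    intro Q
    simp [Finset.smul_sum, mul_smul]
  have h2 : ∑ b, e b • s • ∑ a, x a • P b a = s • ∑ b, e b • ∑ a, x a • P b a := by
    rw [Finset.smul_sum]
    exact Finset.sum_congr rfl fun b _ => smul_comm _ _ _
  simp only [h1] at h
  rw [h2] at h
  rw [pow_two, mul_smul s s (∑ a, x a • R a), ← h, smul_add, smul_smul, smul_smul, mul_comm s 2,
    add_comm]

variable {n : ℕ}

lemma cron_mul_contDiff {f g : (Fin 4 → ℝ) → Matrix (Fin n) (Fin n) ℝ}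
    (hf : ContDiff ℝ 1 f) (hg : ContDiff ℝ 1 g) : ContDiff ℝ 1 (fun y => f y * g y) := by
  have hf' : ∀ i j, ContDiff ℝ 1 (fun y => f y i j) := fun i j =>
    contDiff_pi.1 (contDiff_pi.1 hf i) j
  have hg' : ∀ i j, ContDiff ℝ 1 (fun y => g y i j) := fun i j =>
    contDiff_pi.1 (contDiff_pi.1 hg i) j
  refine contDiff_pi.2 fun i => contDiff_pi.2 fun j => ?_
  simp only [Matrix.mul_apply]
  exact ContDiff.sum fun k _ => (hf' i k).mul (hg' k j)

lemma cron_partialD_contDiff {f : (Fin 4 → ℝ) → Matrix (Fin n) (Fin n) ℝ}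
    (hf : ContDiff ℝ 2 f) (a : Fin 4) : ContDiff ℝ 1 (partialD f a) := by
  exact gen_contDiff (E := Matrix (Fin n) (Fin n) ℝ) hf _

lemma cron_partialD_comm {f : (Fin 4 → ℝ) → Matrix (Fin n) (Fin n) ℝ}
    (hf : ContDiff ℝ 2 f) (a b : Fin 4) (y : Fin 4 → ℝ) :
    partialD (partialD f a) b y = partialD (partialD f b) a y := by
  exact gen_comm (E := Matrix (Fin n) (Fin n) ℝ) hf _ _ y

lemma cron_curvF_contDiff {A : Fin 4 → (Fin 4 → ℝ) → Matrix (Fin n) (Fin n) ℝ}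
    (hA : ∀ a, ContDiff ℝ 2 (A a)) (a b : Fin 4) : ContDiff ℝ 1 (curvF A a b) := by
  have h1 : ∀ a, ContDiff ℝ 1 (A a) := fun a => (hA a).of_le (by norm_num)
  exact ((cron_partialD_contDiff (hA b) a).sub (cron_partialD_contDiff (hA a) b)).add
    ((cron_mul_contDiff (h1 a) (h1 b)).sub (cron_mul_contDiff (h1 b) (h1 a)))

/-- Leibniz rule for the radial contraction. -/
lemma cron_partialD_contract {f : Fin 4 → (Fin 4 → ℝ) → Matrix (Fin n) (Fin n) ℝ}
    (hf : ∀ a, ContDiff ℝ 1 (f a)) (c : Fin 4) (y : Fin 4 → ℝ) :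
    partialD (fun z => ∑ a, z a • f a z) c y = f c y + ∑ a, y a • partialD (f a) c y := by
  exact gen_contract (E := Matrix (Fin n) (Fin n) ℝ) hf c y

lemma cron_contract_curv {A : Fin 4 → (Fin 4 → ℝ) → Matrix (Fin n) (Fin n) ℝ}
    (hA : ∀ a, ContDiff ℝ 2 (A a))
    (hCron : ∀ x : Fin 4 → ℝ, ∑ a, x a • A a x = 0) (b : Fin 4) (y : Fin 4 → ℝ) :
    ∑ a, y a • curvF A a b y = ∑ a, y a • partialD (A b) a y + A b y := by
  have h1 : ∀ a, ContDiff ℝ 1 (A a) := fun a => (hA a).of_le (by norm_num)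
  have h := cron_partialD_contract h1 b y
  have h0 : partialD (fun z => ∑ a, z a • A a z) b y = 0 := by
    simp only [hCron, partialD]
    simp
  rw [h0] at h
  have hl : ∑ a, y a • (A a y * A b y) = 0 := by
    simp_rw [← smul_mul_assoc]
    rw [← Finset.sum_mul, hCron, zero_mul]
  have hr : ∑ a, y a • (A b y * A a y) = 0 := by
    simp_rw [← mul_smul_comm]
    rw [← Finset.mul_sum, hCron, mul_zero]
  simp only [curvF, smul_add, smul_sub, Finset.sum_add_distrib, Finset.sum_sub_distrib, hl, hr]
  rw [eq_neg_of_add_eq_zero_right h.symm]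
  abel

lemma cron_curvF_self (A : Fin 4 → (Fin 4 → ℝ) → Matrix (Fin n) (Fin n) ℝ) (b : Fin 4)
    (y : Fin 4 → ℝ) : curvF A b b y = 0 := by simp [curvF]

/-- For each `b`: `2 ∂_b A_b + y^a ∂_a ∂_b A_b = y^a ∂_b F_{ab}`. -/
lemma cron_euler {A : Fin 4 → (Fin 4 → ℝ) → Matrix (Fin n) (Fin n) ℝ}
    (hA : ∀ a, ContDiff ℝ 2 (A a))
    (hCron : ∀ x : Fin 4 → ℝ, ∑ a, x a • A a x = 0) (b : Fin 4) (y : Fin 4 → ℝ) :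
    (2:ℝ) • partialD (A b) b y + ∑ a, y a • partialD (partialD (A b) b) a y
      = ∑ a, y a • partialD (curvF A a b) b y := by
  have e : (fun z : Fin 4 → ℝ => ∑ a, z a • curvF A a b z)
      = fun z => ∑ a, z a • partialD (A b) a z + A b z :=
    funext fun z => cron_contract_curv hA hCron b z
  have h1 := cron_partialD_contract (fun a => cron_curvF_contDiff hA a b) b y
  have h2 := cron_partialD_contract (fun a => cron_partialD_contDiff (hA b) a) b y
  have h3 : partialD (fun z => ∑ a, z a • partialD (A b) a z + A b z) b y
      = partialD (fun z => ∑ a, z a • partialD (A b) a z) b y + partialD (A b) b y :=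
    gen_contract_add (E := Matrix (Fin n) (Fin n) ℝ)
      (fun a => cron_partialD_contDiff (hA b) a) (hA b) b y
  rw [e, h3, h2, cron_curvF_self, zero_add] at h1
  rw [← h1, two_smul]
  simp_rw [cron_partialD_comm (hA b) b]
  abel

lemma cron_main {A J : Fin 4 → (Fin 4 → ℝ) → Matrix (Fin n) (Fin n) ℝ}
    (hA : ∀ a, ContDiff ℝ 2 (A a))
    (hCron : ∀ x : Fin 4 → ℝ, ∑ a, x a • A a x = 0)
    (hFieldEq : ∀ a, ∀ x : Fin 4 → ℝ, ∑ b, eta b • covDF A b a b x = -(J a x))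
    (y : Fin 4 → ℝ) :
    (2:ℝ) • ∑ b, eta b • partialD (A b) b y
      + ∑ b, eta b • ∑ a, y a • partialD (partialD (A b) b) a y
      = ∑ a, y a • ((∑ b, eta b • (curvF A a b y * A b y - A b y * curvF A a b y)) - J a y) := by
  have hj : ∀ a, (∑ b, eta b • (curvF A a b y * A b y - A b y * curvF A a b y)) - J a y
      = ∑ b, eta b • partialD (curvF A a b) b y := by
    intro a
    rw [sub_eq_add_neg, ← hFieldEq a y, ← Finset.sum_add_distrib]
    refine Finset.sum_congr rfl fun b _ => ?_
    rw [← smul_add, covDF]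
    congr 1
    abel
  simp_rw [hj, Finset.smul_sum (r := (y _ : ℝ))]
  rw [Finset.sum_comm, Finset.smul_sum, ← Finset.sum_add_distrib]
  refine Finset.sum_congr rfl fun b _ => ?_
  rw [smul_comm, ← smul_add, cron_euler hA hCron, Finset.smul_sum]
  exact Finset.sum_congr rfl fun a _ => smul_comm _ _ _

lemma cron_sum_partialD (f : (Fin 4 → ℝ) → Matrix (Fin n) (Fin n) ℝ) (x y : Fin 4 → ℝ) :
    fderiv ℝ f y x = ∑ a, x a • partialD f a y := by
  conv_lhs => rw [pi_eq_sum_univ' x]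
  simp only [map_sum, map_smul, partialD]

end CronHelpers

/-- the Cronström divergence formula: if `A` is `C²`, satisfies the
Cronström gauge condition `∑_a x^a A_a(x) = 0`, and the Yang–Mills field equation
`η^{bc} D_c F_{ab} = −J_a` holds, then
`η^{ab}(∂_a A_b)(x) = ∫₀¹ s²·∑_a x^a ([F_{ab}(sx), A^b(sx)] − J_a(sx)) ds`. -/
theorem cronstrom_divergence_formula {n : ℕ}
    (A : Fin 4 → (Fin 4 → ℝ) → Matrix (Fin n) (Fin n) ℝ)
    (J : Fin 4 → (Fin 4 → ℝ) → Matrix (Fin n) (Fin n) ℝ)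
    (hA : ∀ a, ContDiff ℝ 2 (A a))
    (hJ : ∀ a, Continuous (J a))
    (hCron : ∀ x : Fin 4 → ℝ, ∑ a, x a • A a x = 0)
    (hFieldEq : ∀ a, ∀ x : Fin 4 → ℝ, ∑ b, eta b • covDF A b a b x = -(J a x))
    (x : Fin 4 → ℝ) :
    ∑ a, eta a • partialD (A a) a x
      = ∫ s in (0:ℝ)..1, s^2 • ∑ a, x a •
          ((∑ b, eta b • (curvF A a b (s • x) * A b (s • x)
              - A b (s • x) * curvF A a b (s • x)))
            - J a (s • x)) := by
  have hderiv : ∀ s : ℝ, HasDerivAt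
      (fun s : ℝ => s ^ 2 • ∑ b, eta b • partialD (A b) b (s • x))
      (s ^ 2 • ∑ a, x a •
          ((∑ b, eta b • (curvF A a b (s • x) * A b (s • x)
              - A b (s • x) * curvF A a b (s • x)))
            - J a (s • x))) s := by
    intro s
    have hl : HasDerivAt (fun s : ℝ => s • x) x s := by
      simpa using (hasDerivAt_id s).smul_const x
    have hb : ∀ b, HasDerivAt (fun s : ℝ => partialD (A b) b (s • x))
        (∑ a, x a • partialD (partialD (A b) b) a (s • x)) s := by
      intro b
      rw [← cron_sum_partialD]
      exact (((cron_partialD_contDiff (hA b) b).differentiable (by norm_num)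
        (s • x)).hasFDerivAt).comp_hasDerivAt s hl
    have hs : HasDerivAt (fun s : ℝ => ∑ b, eta b • partialD (A b) b (s • x))
        (∑ b, eta b • ∑ a, x a • partialD (partialD (A b) b) a (s • x)) s :=
      HasDerivAt.fun_sum fun b _ => (hb b).fun_const_smul (eta b)
    have h2 := (hasDerivAt_pow 2 s).fun_smul hs
    refine h2.congr_deriv ?_
    simp only [Nat.cast_ofNat, Nat.add_one_sub_one, pow_one]
    exact gen_smul (E := Matrix (Fin n) (Fin n) ℝ) s x _ eta
      (fun b a => partialD (partialD (A b) b) a (s • x)) _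
      (cron_main hA hCron hFieldEq (s • x))
  have hmulc : ∀ f g : ℝ → Matrix (Fin n) (Fin n) ℝ, Continuous f → Continuous g →
      Continuous (fun s => f s * g s) := fun f g hf hg => hf.matrix_mul hg
  have hl : Continuous (fun s : ℝ => s • x) := by fun_prop
  have hcF : ∀ a b, Continuous (fun s : ℝ => curvF A a b (s • x)) := fun a b =>
    (cron_curvF_contDiff hA a b).continuous.comp hl
  have hcA : ∀ b, Continuous (fun s : ℝ => A b (s • x)) := fun b =>
    (hA b).continuous.comp hl
  have hcJ : ∀ b, Continuous (fun s : ℝ => J b (s • x)) := fun b => (hJ b).comp hl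
  have hcont : Continuous (fun s : ℝ => s ^ 2 • ∑ a, x a •
          ((∑ b, eta b • (curvF A a b (s • x) * A b (s • x)
              - A b (s • x) * curvF A a b (s • x)))
            - J a (s • x))) := by
    exact gen_continuous (E := Matrix (Fin n) (Fin n) ℝ) x eta
      (fun a b => (hmulc _ _ (hcF a b) (hcA b)).sub (hmulc _ _ (hcA b) (hcF a b))) hcJ
  have : CompleteSpace (Matrix (Fin n) (Fin n) ℝ) := FiniteDimensional.complete ℝ _
  have := intervalIntegral.integral_eq_sub_of_hasDerivAt (a := 0) (b := 1)
    (fun s _ => hderiv s) (hcont.intervalIntegrable 0 1)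
  rw [this]
  simp
end

section
/- Let d ∈ ℕ, t₀ > 0, E ≥ 0, λ > 0, and let φ : ℝ × ℝ³ → ℝ^d be continuously differentiable. Suppose that for every t ∈ [−t₀, 0], ∫_{B(0,t₀)} |∂_tφ(t,x)|² dx ≤ E, and additionally that (λ/4)·∫_{B(0,t₀)} |φ(−t₀,x)|⁴ dx ≤ E, where B(0,t₀) ⊂ ℝ³ is the ball of radius t₀ about the origin. Then ( ∫_{B(0,t₀)} |φ(−|x|, x)|² dx )^{1/2} ≤ (4E/λ)^{1/4}·((4/3)·π·t₀³)^{1/4} + 2·√E·t₀. -/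
open MeasureTheory

theorem cs_aux {α : Type*} [MeasurableSpace α] (μ : Measure α) (f g : α → ℝ)
    (hf : Integrable (fun x => f x ^ 2) μ) (hg : Integrable (fun x => g x ^ 2) μ)
    (hfg : Integrable (fun x => f x * g x) μ) :
    (∫ x, f x * g x ∂μ) ^ 2 ≤ (∫ x, f x ^ 2 ∂μ) * (∫ x, g x ^ 2 ∂μ) := by
  have key : ∀ t : ℝ, 0 ≤ (∫ x, g x ^ 2 ∂μ) * (t * t) + (2 * ∫ x, f x * g x ∂μ) * t
      + ∫ x, f x ^ 2 ∂μ := by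
    intro t
    have h0 : 0 ≤ ∫ x, (f x + t * g x) ^ 2 ∂μ := integral_nonneg fun x => sq_nonneg _
    have h1 : ∫ x, (f x + t * g x) ^ 2 ∂μ
        = ∫ x, (f x ^ 2 + (2 * t) * (f x * g x)) + (t * t) * g x ^ 2 ∂μ := by
      congr 1; ext x; ring
    have hs : Integrable (fun x => f x ^ 2 + (2 * t) * (f x * g x)) μ :=
      hf.add (hfg.const_mul _)
    rw [h1, integral_add hs (hg.const_mul _),
      integral_add hf (hfg.const_mul _), integral_const_mul, integral_const_mul] at h0
    linarith
  have := discrim_le_zero key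
  unfold discrim at this
  linarith

theorem minkowski_aux {α : Type*} [MeasurableSpace α] (μ : Measure α) (f g : α → ℝ)
    (hf : Integrable (fun x => f x ^ 2) μ) (hg : Integrable (fun x => g x ^ 2) μ)
    (hfg : Integrable (fun x => f x * g x) μ) (A B : ℝ) (hA : 0 ≤ A) (hB : 0 ≤ B)
    (hfA : ∫ x, f x ^ 2 ∂μ ≤ A ^ 2) (hgB : ∫ x, g x ^ 2 ∂μ ≤ B ^ 2) :
    ∫ x, (f x + g x) ^ 2 ∂μ ≤ (A + B) ^ 2 := by
  have h1 : ∫ x, (f x + g x) ^ 2 ∂μ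
      = ∫ x, (f x ^ 2 + 2 * (f x * g x)) + g x ^ 2 ∂μ := by
    congr 1; ext x; ring
  have hs : Integrable (fun x => f x ^ 2 + 2 * (f x * g x)) μ := hf.add (hfg.const_mul _)
  rw [h1, integral_add hs hg,
    integral_add hf (hfg.const_mul _), integral_const_mul]
  have h2 := cs_aux μ f g hf hg hfg
  have h3 : (∫ x, f x * g x ∂μ) ^ 2 ≤ (A * B) ^ 2 := by
    rw [mul_pow]
    exact h2.trans (mul_le_mul hfA hgB (integral_nonneg fun x => sq_nonneg _) (sq_nonneg _))
  have h4 := abs_le_of_sq_le_sq h3 (mul_nonneg hA hB)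
  nlinarith [(le_abs_self _).trans h4]

theorem intOn_ball {r : ℝ} {f : EuclideanSpace ℝ (Fin 3) → ℝ} (hf : Continuous f) :
    IntegrableOn f (Metric.ball 0 r) :=
  (hf.continuousOn.integrableOn_compact (isCompact_closedBall 0 r)).mono_set
    Metric.ball_subset_closedBall

/-- Lemma A.1 (second bound, case `λ ≠ 0`): if additionally the
quartic energy `(λ/4)·∫_{B(0,t₀)} |φ(−t₀,x)|⁴ dx` is bounded by `E`, then the `L²`
norm of `φ` on the backward lightcone surface is bounded by
`(4E/λ)^{1/4}·((4/3)πt₀³)^{1/4} + 2·√E·t₀`. -/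
theorem cone_L2_bound_quartic (d : ℕ) (t₀ E lam : ℝ) (ht₀ : 0 < t₀) (hE : 0 ≤ E)
    (hlam : 0 < lam)
    (φ : ℝ × EuclideanSpace ℝ (Fin 3) → EuclideanSpace ℝ (Fin d))
    (hφ : ContDiff ℝ 1 φ)
    (hen : ∀ t ∈ Set.Icc (-t₀) (0 : ℝ),
      (∫ x in Metric.ball (0 : EuclideanSpace ℝ (Fin 3)) t₀,
        ‖deriv (fun s : ℝ => φ (s, x)) t‖^2) ≤ E)
    (hquart : (lam / 4) * (∫ x in Metric.ball (0 : EuclideanSpace ℝ (Fin 3)) t₀,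
        ‖φ (-t₀, x)‖^4) ≤ E) :
    Real.sqrt (∫ x in Metric.ball (0 : EuclideanSpace ℝ (Fin 3)) t₀, ‖φ (-‖x‖, x)‖^2)
      ≤ (4 * E / lam) ^ ((1:ℝ)/4) * ((4/3) * Real.pi * t₀^3) ^ ((1:ℝ)/4)
        + 2 * Real.sqrt E * t₀ := by
  set B := Metric.ball (0 : EuclideanSpace ℝ (Fin 3)) t₀ with hBdef
  let g : ℝ × EuclideanSpace ℝ (Fin 3) → EuclideanSpace ℝ (Fin d) :=
    fun p => fderiv ℝ φ p (1, 0)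
  have hgc : Continuous g := (hφ.continuous_fderiv one_ne_zero).clm_apply continuous_const
  have hφc : Continuous φ := hφ.continuous
  have hder : ∀ x t, HasDerivAt (fun s : ℝ => φ (s, x)) (g (t, x)) t := by
    intro x t
    have h1 : HasFDerivAt φ (fderiv ℝ φ (t, x)) (t, x) :=
      (hφ.differentiable one_ne_zero (t, x)).hasFDerivAt
    have h2 : HasDerivAt (fun s : ℝ => (s, x)) ((1 : ℝ), (0 : EuclideanSpace ℝ (Fin 3))) t :=
      (hasDerivAt_id t).prodMk (hasDerivAt_const t x)
    exact h1.comp_hasDerivAt t h2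
  have hen' : ∀ t ∈ Set.Icc (-t₀) (0 : ℝ), (∫ x in B, ‖g (t, x)‖ ^ 2) ≤ E := by
    intro t ht
    have := hen t ht
    simpa only [(hder _ _).deriv] using this
  let a : EuclideanSpace ℝ (Fin 3) → ℝ := fun x => ‖φ (-t₀, x)‖
  let b : EuclideanSpace ℝ (Fin 3) → ℝ := fun x => ∫ s in (-t₀)..0, ‖g (s, x)‖
  have hac : Continuous a := by fun_prop
  have hbc : Continuous b := by
    apply intervalIntegral.continuous_parametric_intervalIntegral_of_continuous'
    show Continuous fun p : EuclideanSpace ℝ (Fin 3) × ℝ => ‖g (p.2, p.1)‖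
    fun_prop
  have hpt : ∀ x ∈ B, ‖φ (-‖x‖, x)‖ ≤ a x + b x := by
    intro x hx
    have hx' : ‖x‖ < t₀ := by simpa [hBdef] using hx
    have hle : -t₀ ≤ -‖x‖ := by linarith
    have hgx : Continuous fun s => g (s, x) := by fun_prop
    have hftc : ∫ s in (-t₀)..(-‖x‖), g (s, x) = φ (-‖x‖, x) - φ (-t₀, x) :=
      intervalIntegral.integral_eq_sub_of_hasDerivAt (fun t _ => hder x t)
        (hgx.intervalIntegrable _ _)
    have h1 : ‖∫ s in (-t₀)..(-‖x‖), g (s, x)‖ ≤ ∫ s in (-t₀)..(-‖x‖), ‖g (s, x)‖ :=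
      intervalIntegral.norm_integral_le_integral_norm hle
    have h2 : ∫ s in (-t₀)..(-‖x‖), ‖g (s, x)‖ ≤ b x := by
      apply intervalIntegral.integral_mono_interval le_rfl hle (by simp)
      · exact Filter.Eventually.of_forall fun s => norm_nonneg _
      · exact hgx.norm.intervalIntegrable _ _
    have h3 : φ (-‖x‖, x) = φ (-t₀, x) + ∫ s in (-t₀)..(-‖x‖), g (s, x) := by
      rw [hftc]; abel
    calc ‖φ (-‖x‖, x)‖ ≤ ‖φ (-t₀, x)‖ + ‖∫ s in (-t₀)..(-‖x‖), g (s, x)‖ := by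
          rw [h3]; exact norm_add_le _ _
      _ ≤ a x + b x := add_le_add le_rfl (h1.trans h2)
  -- bound for b
  have hb2 : ∫ x in B, b x ^ 2 ≤ (2 * Real.sqrt E * t₀) ^ 2 := by
    have hbx : ∀ x, b x ^ 2 ≤ t₀ * ∫ s in Set.Ioc (-t₀) 0, ‖g (s, x)‖ ^ 2 := by
      intro x
      have hgx : Continuous fun s => ‖g (s, x)‖ := by fun_prop
      have h := cs_aux (volume.restrict (Set.Ioc (-t₀) 0)) (fun _ => 1) (fun s => ‖g (s, x)‖)
        (continuous_const.integrableOn_Ioc) ((hgx.pow 2).integrableOn_Ioc)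
        ((continuous_const.mul hgx).integrableOn_Ioc)
      have hb : b x = ∫ s in Set.Ioc (-t₀) 0, ‖g (s, x)‖ :=
        intervalIntegral.integral_of_le (by linarith)
      rw [hb]
      simpa [ht₀.le] using h
    have hint : Integrable (Function.uncurry fun (x : EuclideanSpace ℝ (Fin 3)) (s : ℝ) =>
        ‖g (s, x)‖ ^ 2) ((volume.restrict B).prod (volume.restrict (Set.Ioc (-t₀) 0))) := by
      rw [Measure.prod_restrict]
      have hc : Continuous (Function.uncurry fun (x : EuclideanSpace ℝ (Fin 3)) (s : ℝ) =>
        ‖g (s, x)‖ ^ 2) := by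
        show Continuous fun p : EuclideanSpace ℝ (Fin 3) × ℝ => ‖g (p.2, p.1)‖ ^ 2
        fun_prop
      exact (hc.continuousOn.integrableOn_compact
        ((isCompact_closedBall (0 : EuclideanSpace ℝ (Fin 3)) t₀).prod
          (isCompact_Icc (a := -t₀) (b := 0)))).mono_set
        (Set.prod_mono Metric.ball_subset_closedBall Set.Ioc_subset_Icc_self)
    have h1 : ∫ x in B, b x ^ 2
        ≤ ∫ x in B, t₀ * ∫ s in Set.Ioc (-t₀) 0, ‖g (s, x)‖ ^ 2 :=
      integral_mono (intOn_ball (hbc.pow 2)) (hint.integral_prod_left.const_mul _) hbx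
    have h2 : ∫ s in Set.Ioc (-t₀) 0, ∫ x in B, ‖g (s, x)‖ ^ 2
        ≤ ∫ s in Set.Ioc (-t₀) 0, E :=
      setIntegral_mono_on hint.integral_prod_right (continuous_const.integrableOn_Ioc)
        measurableSet_Ioc (fun s hs => hen' s (Set.Ioc_subset_Icc_self hs))
    rw [integral_const_mul, integral_integral_swap hint] at h1
    have h3 : ∫ s in Set.Ioc (-t₀) 0, E = t₀ * E := by simp [ht₀.le]
    rw [h3] at h2
    have h4 : (2 * Real.sqrt E * t₀) ^ 2 = 4 * (t₀ * (t₀ * E)) := by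
      rw [mul_pow, mul_pow, Real.sq_sqrt hE]; ring
    rw [h4]
    have h5 := mul_le_mul_of_nonneg_left h2 ht₀.le
    have h6 : 0 ≤ t₀ * (t₀ * E) := by positivity
    linarith
  -- bound for a
  set V : ℝ := (4/3) * Real.pi * t₀^3 with hV
  have hV0 : 0 ≤ V := by positivity
  have hF0 : 0 ≤ 4 * E / lam := by positivity
  have hvol : volume.real B = V := by
    rw [Measure.real, hBdef, EuclideanSpace.volume_ball_fin_three]
    rw [ENNReal.toReal_mul, ENNReal.toReal_pow, ENNReal.toReal_ofReal ht₀.le,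
      ENNReal.toReal_ofReal (by positivity), hV]
    ring
  have ha2 : ∫ x in B, a x ^ 2 ≤ ((4 * E / lam) ^ ((1:ℝ)/4) * V ^ ((1:ℝ)/4)) ^ 2 := by
    have h := cs_aux (volume.restrict B) (fun _ => 1) (fun x => a x ^ 2)
      (intOn_ball continuous_const) (intOn_ball ((hac.pow 2).pow 2))
      (intOn_ball (continuous_const.mul (hac.pow 2)))
    have h1 : ∫ x in B, (a x ^ 2) ^ 2 ≤ 4 * E / lam := by
      have e : ∀ x, (a x ^ 2) ^ 2 = ‖φ (-t₀, x)‖ ^ 4 := fun x => by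
        show (‖φ (-t₀, x)‖ ^ 2) ^ 2 = _
        ring
      simp only [e]
      rw [le_div_iff₀ hlam]
      linarith
    have h2 : (∫ x in B, a x ^ 2) ^ 2 ≤ V * ∫ x in B, (a x ^ 2) ^ 2 := by
      simpa [hvol] using h
    have e4 : ∀ y : ℝ, 0 ≤ y → (y ^ ((1:ℝ)/4)) ^ 4 = y := fun y hy => by
      rw [← Real.rpow_natCast, ← Real.rpow_mul hy]; norm_num
    have h3 : (∫ x in B, a x ^ 2) ^ 2
        ≤ (((4 * E / lam) ^ ((1:ℝ)/4) * V ^ ((1:ℝ)/4)) ^ 2) ^ 2 := by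
      rw [← pow_mul, mul_pow, e4 _ hF0, e4 _ hV0]
      nlinarith [mul_le_mul_of_nonneg_left h1 hV0]
    exact (le_abs_self _).trans (abs_le_of_sq_le_sq h3 (sq_nonneg _))
  have hA0 : 0 ≤ (4 * E / lam) ^ ((1:ℝ)/4) * V ^ ((1:ℝ)/4) := by positivity
  have hB0 : 0 ≤ 2 * Real.sqrt E * t₀ := by positivity
  have hmain := minkowski_aux (volume.restrict B) a b (intOn_ball (hac.pow 2))
    (intOn_ball (hbc.pow 2)) (intOn_ball (hac.mul hbc)) _ _ hA0 hB0 ha2 hb2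
  rw [Real.sqrt_le_left (add_nonneg hA0 hB0)]
  refine le_trans ?_ hmain
  refine setIntegral_mono_on (intOn_ball (by fun_prop)) (intOn_ball ((hac.add hbc).pow 2))
    measurableSet_ball (fun x hx => ?_)
  exact pow_le_pow_left₀ (norm_nonneg _) (hpt x hx) 2
end
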